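/- arXiv:2605.04917 — 3 statements merged into one kernel-verified Lean document; each statement's English description precedes it below -/
import Mathlib

section
/- Let σ : ℝ^{n_r} → ℝ^{n_r} be Lipschitz with constant L_σ, and let W_res ∈ ℝ^{n_r×n_r}, W_in ∈ ℝ^{n_r×n_v} satisfy L_σ·‖W_res‖ < 1. Then for every bounded input sequence v : ℤ → ℝ^{n_v} there exists a unique bounded sequence r : ℤ → ℝ^{n_r} satisfying r_k = σ(W_res r_{k-1} + W_in v_k) for all k ∈ ℤ. -/
open scoped NNReal

/-!
A bounded trajectory is a fixed point of the operator `r ↦ (k ↦ σ (W_res (r (k - 1)) + W_in (v k)))`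
on the space of bounded sequences with the supremum metric. This space is complete, and the operator
contracts it by the factor `Lσ * ‖W_res‖`, so the Banach fixed point theorem applies. The time shift
`k ↦ k - 1` only reindexes the sequence, hence does not increase distances, and may be replaced by
any self-map `p` of any index set.
-/

open Set Bornology
open scoped BoundedContinuousFunction

theorem isBounded_range_iff_exists_norm_le {ι E : Type*} [SeminormedAddCommGroup E] {r : ι → E} :
    IsBounded (range r) ↔ ∃ M : ℝ, ∀ k, ‖r k‖ ≤ M := by
  simp only [isBounded_iff_forall_norm_le, forall_mem_range]

theorem isBounded_range_apply_of_lipschitzWith {ι X Y : Type*} [PseudoMetricSpace X]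
    [PseudoMetricSpace Y] {K : ℝ≥0} {f : ι → X → Y} {x y : ι → X}
    (hf : ∀ k, LipschitzWith K (f k))
    (hx : IsBounded (range x)) (hy : IsBounded (range y))
    (hfx : IsBounded (range fun k => f k (x k))) :
    IsBounded (range fun k => f k (y k)) := by
  obtain ⟨C, hC⟩ := Metric.isBounded_iff.1 (hy.union hx)
  have hdist : ∀ k, dist (f k (y k)) (f k (x k)) ≤ K * C := fun k =>
    (hf k).dist_le_mul_of_le (hC (.inl (mem_range_self k)) (.inr (mem_range_self k)))
  refine (hfx.cthickening (δ := K * C)).subset ?_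
  rintro _ ⟨k, rfl⟩
  exact Metric.mem_cthickening_of_dist_le _ _ _ _ (mem_range_self k) (hdist k)

section Trajectory

variable {ι E : Type*} {K : ℝ≥0} {f : ι → E → E} {p : ι → ι} {x₀ : E}

section UpdateOperator

variable [TopologicalSpace ι] [DiscreteTopology ι]

/-- The operator `r ↦ (k ↦ f k (r (p k)))` on bounded families, for update maps `f k` that are
uniformly Lipschitz and bounded at one point `x₀`. Its fixed points are the bounded trajectories of
the updates. The index set is discrete, so that `ι →ᵇ E` consists of all bounded families. -/
def boundedUpdate [PseudoMetricSpace E] (p : ι → ι) (hf : ∀ k, LipschitzWith K (f k))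
    (hx₀ : IsBounded (range fun k => f k x₀)) (r : ι →ᵇ E) : ι →ᵇ E where
  toFun k := f k (r (p k))
  continuous_toFun := continuous_of_discreteTopology
  map_bounded' := Metric.isBounded_range_iff.1 <|
    isBounded_range_apply_of_lipschitzWith hf (isBounded_singleton.subset range_const_subset)
      (r.isBounded_range.subset (range_comp_subset_range p r)) hx₀

theorem lipschitzWith_boundedUpdate [PseudoMetricSpace E] (hf : ∀ k, LipschitzWith K (f k))
    (hx₀ : IsBounded (range fun k => f k x₀)) :
    LipschitzWith K (boundedUpdate p hf hx₀) :=
  LipschitzWith.of_dist_le_mul fun r s =>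
    (BoundedContinuousFunction.dist_le (by positivity)).2 fun k =>
      (hf k).dist_le_mul_of_le (BoundedContinuousFunction.dist_coe_le_dist (p k))

theorem existsUnique_isFixedPt_boundedUpdate [MetricSpace E] [CompleteSpace E] (hK : K < 1)
    (hf : ∀ k, LipschitzWith K (f k)) (hx₀ : IsBounded (range fun k => f k x₀)) :
    ∃! r, Function.IsFixedPt (boundedUpdate p hf hx₀) r := by
  have : Nonempty (ι →ᵇ E) := ⟨BoundedContinuousFunction.const ι x₀⟩
  have hcontracting : ContractingWith K (boundedUpdate p hf hx₀) :=
    ⟨hK, lipschitzWith_boundedUpdate hf hx₀⟩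
  exact ⟨_, hcontracting.fixedPoint_isFixedPt, fun _ => hcontracting.fixedPoint_unique⟩

end UpdateOperator

theorem existsUnique_isBounded_range_forall_eq [MetricSpace E] [CompleteSpace E] (p : ι → ι)
    (hK : K < 1) (hf : ∀ k, LipschitzWith K (f k)) (hx₀ : IsBounded (range fun k => f k x₀)) :
    ∃! r : ι → E, IsBounded (range r) ∧ ∀ k, r k = f k (r (p k)) := by
  let _ : TopologicalSpace ι := ⊥
  have : DiscreteTopology ι := ⟨rfl⟩
  obtain ⟨r, hr, hunique⟩ := existsUnique_isFixedPt_boundedUpdate (p := p) hK hf hx₀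
  refine ⟨r, ⟨r.isBounded_range, fun k => (DFunLike.congr_fun hr k).symm⟩, ?_⟩
  rintro s ⟨hbounded, hs⟩
  let s' : ι →ᵇ E := ⟨⟨s, continuous_of_discreteTopology⟩, Metric.isBounded_range_iff.1 hbounded⟩
  have hs' : Function.IsFixedPt (boundedUpdate p hf hx₀) s' :=
    DFunLike.ext _ _ fun k => (hs k).symm
  exact congrArg DFunLike.coe (hunique s' hs')

end Trajectory

section Reservoir

variable {𝕜 E G : Type*} [NontriviallyNormedField 𝕜] [SeminormedAddCommGroup G] [NormedSpace 𝕜 G]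

theorem lipschitzWith_comp_apply_add [SeminormedAddCommGroup E] [NormedSpace 𝕜 E] {Y : Type*}
    [PseudoEMetricSpace Y] {σ : G → Y} {L : ℝ≥0} (hσ : LipschitzWith L σ) (W : E →L[𝕜] G) (u : G) :
    LipschitzWith (L * ‖W‖₊) fun x => σ (W x + u) := by
  have haffine : LipschitzWith ‖W‖₊ fun x => W x + u := by
    simpa only [add_zero] using W.lipschitz.add (LipschitzWith.const u)
  exact hσ.comp haffine

theorem reservoir_unique_bounded_trajectory_general {ι V : Type*} [NormedAddCommGroup E]
    [NormedSpace 𝕜 E] [CompleteSpace E] [SeminormedAddCommGroup V] [NormedSpace 𝕜 V] (p : ι → ι)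
    (σ : G → E) (Lσ : ℝ≥0) (hσ : LipschitzWith Lσ σ) (Wres : E →L[𝕜] G) (Win : V →L[𝕜] G)
    (hcontr : (Lσ : ℝ) * ‖Wres‖ < 1) (v : ι → V) (hv : ∃ M : ℝ, ∀ k, ‖v k‖ ≤ M) :
    ∃! r : ι → E, (∃ M : ℝ, ∀ k, ‖r k‖ ≤ M) ∧ ∀ k, r k = σ (Wres (r (p k)) + Win (v k)) := by
  have hrest : IsBounded (range fun k => σ (Wres 0 + Win (v k))) := by
    have himage := hσ.isBounded_image <| Win.lipschitz.isBounded_image <|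
      isBounded_range_iff_exists_norm_le.2 hv
    simpa only [map_zero, zero_add, ← range_comp, Function.comp_def] using himage
  simp only [← isBounded_range_iff_exists_norm_le]
  exact existsUnique_isBounded_range_forall_eq p (K := Lσ * ‖Wres‖₊) (by exact_mod_cast hcontr)
    (fun k => lipschitzWith_comp_apply_add hσ Wres (Win (v k))) hrest

end Reservoir

/-- **Well-posed reservoir lifting (existence and uniqueness).**
If the activation `σ` is Lipschitz with constant `Lσ` and `Lσ * ‖W_res‖ < 1`
(spectral/operator norm), then for every bounded input sequence `v : ℤ → ℝ^{n_v}`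
there exists a unique bounded sequence `r : ℤ → ℝ^{n_r}` satisfying
`r k = σ (W_res (r (k-1)) + W_in (v k))` for all `k ∈ ℤ`. -/
theorem reservoir_unique_bounded_trajectory {nr nv : ℕ}
    (σ : EuclideanSpace ℝ (Fin nr) → EuclideanSpace ℝ (Fin nr)) (Lσ : ℝ≥0)
    (hσ : LipschitzWith Lσ σ)
    (Wres : EuclideanSpace ℝ (Fin nr) →L[ℝ] EuclideanSpace ℝ (Fin nr))
    (Win : EuclideanSpace ℝ (Fin nv) →L[ℝ] EuclideanSpace ℝ (Fin nr))
    (hcontr : (Lσ : ℝ) * ‖Wres‖ < 1)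
    (v : ℤ → EuclideanSpace ℝ (Fin nv))
    (hv : ∃ M : ℝ, ∀ k : ℤ, ‖v k‖ ≤ M) :
    ∃! r : ℤ → EuclideanSpace ℝ (Fin nr),
      (∃ M : ℝ, ∀ k : ℤ, ‖r k‖ ≤ M) ∧
      (∀ k : ℤ, r k = σ (Wres (r (k - 1)) + Win (v k))) :=
  reservoir_unique_bounded_trajectory_general (· - 1) σ Lσ hσ Wres Win hcontr v hv
end

section
/- Let σ : ℝ^{n_r} → ℝ^{n_r} be Lipschitz with constant L_σ, and let W_res, W_in satisfy L_σ·‖W_res‖ < 1. Let v, ṽ : ℤ → ℝ^{n_v} be bounded input sequences and let r, r̃ : ℤ → ℝ^{n_r} be the corresponding unique bounded trajectories satisfying r_k = σ(W_res r_{k-1} + W_in v_k) and r̃_k = σ(W_res r̃_{k-1} + W_in ṽ_k) for all k ∈ ℤ. If v_j = ṽ_j for all j ≤ k, then r_k = r̃_k. (The input-to-state map is causal.) -/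
open scoped NNReal

/-!
Up to time `k` both trajectories obey the same recursion, since the inputs agree there. Each step of
it is a `K`-contraction, so going back `n` steps bounds `dist (r k) (r' k)` by `K ^ n` times the
distance at time `k - n`. The latter is bounded in `n` and `K < 1`. Causality is thus uniqueness of
bounded trajectories applied to the past alone.
-/

open Bornology Filter Set Topology

section NonautonomousRecursion

variable {X : Type*} {K : ℝ≥0} {f : ℤ → X → X} {x y : ℤ → X} {k : ℤ}

theorem dist_le_pow_mul_dist_sub_of_recursion [PseudoMetricSpace X]
    (hf : ∀ j ≤ k, LipschitzWith K (f j))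
    (hx : ∀ j ≤ k, x j = f j (x (j - 1))) (hy : ∀ j ≤ k, y j = f j (y (j - 1))) (n : ℕ) :
    dist (x k) (y k) ≤ K ^ n * dist (x (k - n)) (y (k - n)) := by
  induction n with
  | zero => simp
  | succ n ih =>
    have hj : k - n ≤ k := by lia
    have hpred : k - n - 1 = k - (n + 1 : ℕ) := by lia
    calc
      dist (x k) (y k) ≤ K ^ n * dist (x (k - n)) (y (k - n)) := ih
      _ = K ^ n * dist (f (k - n) (x (k - n - 1))) (f (k - n) (y (k - n - 1))) := by
        rw [hx _ hj, hy _ hj]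
      _ ≤ K ^ n * (K * dist (x (k - n - 1)) (y (k - n - 1))) := by
        gcongr
        exact (hf _ hj).dist_le_mul _ _
      _ = K ^ (n + 1) * dist (x (k - (n + 1 : ℕ))) (y (k - (n + 1 : ℕ))) := by
        rw [hpred, pow_succ, mul_assoc]

theorem eq_of_contracting_recursion_of_isBounded_past [MetricSpace X] (hK : K < 1)
    (hf : ∀ j ≤ k, LipschitzWith K (f j))
    (hx : ∀ j ≤ k, x j = f j (x (j - 1))) (hy : ∀ j ≤ k, y j = f j (y (j - 1)))
    (hxb : IsBounded (x '' Iic k)) (hyb : IsBounded (y '' Iic k)) :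
    x k = y k := by
  obtain ⟨C, hC⟩ := Metric.isBounded_iff.1 (hxb.union hyb)
  have dist_past_le (n : ℕ) : dist (x (k - n)) (y (k - n)) ≤ C :=
    have hn : k - n ∈ Iic k := mem_Iic.2 (by lia)
    hC (.inl (mem_image_of_mem x hn)) (.inr (mem_image_of_mem y hn))
  have dist_le (n : ℕ) : dist (x k) (y k) ≤ K ^ n * C :=
    (dist_le_pow_mul_dist_sub_of_recursion hf hx hy n).trans (by gcongr; exact dist_past_le n)
  have bound_tendsto : Tendsto (fun n : ℕ ↦ (K : ℝ) ^ n * C) atTop (𝓝 0) := by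
    simpa only [zero_mul] using
      (tendsto_pow_atTop_nhds_zero_of_lt_one K.coe_nonneg (mod_cast hK)).mul_const C
  exact dist_le_zero.1 (ge_of_tendsto' bound_tendsto dist_le)

end NonautonomousRecursion

theorem lipschitzWith_comp_clm_add_const {𝕜 E G X : Type*} [NontriviallyNormedField 𝕜]
    [SeminormedAddCommGroup E] [NormedSpace 𝕜 E] [SeminormedAddCommGroup G] [NormedSpace 𝕜 G]
    [PseudoEMetricSpace X] {σ : G → X} {L : ℝ≥0} (hσ : LipschitzWith L σ) (W : E →L[𝕜] G) (b : G) :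
    LipschitzWith (L * ‖W‖₊) fun x ↦ σ (W x + b) :=
  hσ.comp (by simpa using W.lipschitz.add (.const b))

theorem isBounded_image_of_forall_norm_le {ι E : Type*} [SeminormedAddCommGroup E] {x : ι → E}
    (hx : ∃ M : ℝ, ∀ i, ‖x i‖ ≤ M) (s : Set ι) : IsBounded (x '' s) :=
  isBounded_iff_forall_norm_le.2 (hx.imp fun _ hM ↦ forall_mem_image.2 fun i _ ↦ hM i)

theorem reservoir_input_state_map_causal_general {V X : Type*} [MetricSpace X] {K : ℝ≥0}
    (hK : K < 1) {F : V → X → X} (hF : ∀ u, LipschitzWith K (F u)) {v v' : ℤ → V} {r r' : ℤ → X}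
    {k : ℤ} (hrb : IsBounded (r '' Iic k)) (hrb' : IsBounded (r' '' Iic k))
    (hr : ∀ j ≤ k, r j = F (v j) (r (j - 1))) (hr' : ∀ j ≤ k, r' j = F (v' j) (r' (j - 1)))
    (hagree : ∀ j ≤ k, v j = v' j) :
    r k = r' k :=
  have hr'_v (j : ℤ) (hj : j ≤ k) : r' j = F (v j) (r' (j - 1)) := hagree j hj ▸ hr' j hj
  eq_of_contracting_recursion_of_isBounded_past hK (fun j _ ↦ hF (v j)) hr hr'_v hrb hrb'

/-- **Causality of the input-to-state map.**
Under the ESP contraction condition, if two bounded inputs agree at all times `j ≤ k`,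
the corresponding unique bounded reservoir trajectories agree at time `k`. -/
theorem reservoir_input_state_map_causal {nr nv : ℕ}
    (σ : EuclideanSpace ℝ (Fin nr) → EuclideanSpace ℝ (Fin nr)) (Lσ : ℝ≥0)
    (hσ : LipschitzWith Lσ σ)
    (Wres : EuclideanSpace ℝ (Fin nr) →L[ℝ] EuclideanSpace ℝ (Fin nr))
    (Win : EuclideanSpace ℝ (Fin nv) →L[ℝ] EuclideanSpace ℝ (Fin nr))
    (hcontr : (Lσ : ℝ) * ‖Wres‖ < 1)
    (v v' : ℤ → EuclideanSpace ℝ (Fin nv))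
    (hv : ∃ M : ℝ, ∀ k : ℤ, ‖v k‖ ≤ M)
    (hv' : ∃ M : ℝ, ∀ k : ℤ, ‖v' k‖ ≤ M)
    (r r' : ℤ → EuclideanSpace ℝ (Fin nr))
    (hrbdd : ∃ M : ℝ, ∀ k : ℤ, ‖r k‖ ≤ M)
    (hr'bdd : ∃ M : ℝ, ∀ k : ℤ, ‖r' k‖ ≤ M)
    (hr : ∀ k : ℤ, r k = σ (Wres (r (k - 1)) + Win (v k)))
    (hr' : ∀ k : ℤ, r' k = σ (Wres (r' (k - 1)) + Win (v' k)))
    (k : ℤ) (hagree : ∀ j : ℤ, j ≤ k → v j = v' j) :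
    r k = r' k :=
  reservoir_input_state_map_causal_general (F := fun u x ↦ σ (Wres x + Win u))
    (K := Lσ * ‖Wres‖₊) (mod_cast hcontr)
    (fun u ↦ lipschitzWith_comp_clm_add_const hσ Wres (Win u))
    (isBounded_image_of_forall_norm_le hrbdd _) (isBounded_image_of_forall_norm_le hr'bdd _)
    (fun j _ ↦ hr j) (fun j _ ↦ hr' j) hagree
end

section
/- Let σ : ℝ^{n_r} → ℝ^{n_r} be Lipschitz with constant L_σ, let W_res, W_in satisfy γ := L_σ·‖W_res‖ < 1, and let v, ṽ : ℤ → ℝ^{n_v} be bounded input sequences with corresponding unique bounded trajectories r, r̃. Fix k ∈ ℤ and τ ∈ ℕ. If v_j = ṽ_j for all j with k − τ < j ≤ k, then ‖r_k − r̃_k‖ ≤ γ^τ · sup_j ‖r_j − r̃_j‖. (Fading-memory property: the lifted state's dependence on inputs older than τ steps is bounded by γ^τ.) -/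
open scoped NNReal

open Set

section DrivenTrajectory

variable {U X : Type*}

/-- A trajectory of the non-autonomous dynamical system `F` driven by the input sequence `u`.
The input at time `k` acts on the transition from time `k - 1` to time `k`. -/
def IsDrivenTrajectory (F : U → X → X) (u : ℤ → U) (x : ℤ → X) : Prop :=
  ∀ k, x k = F (u k) (x (k - 1))

namespace IsDrivenTrajectory

variable [PseudoMetricSpace X] {F : U → X → X} {K : ℝ≥0} {u v : ℤ → U} {x y : ℤ → X} {k : ℤ} {τ : ℕ}

theorem dist_le_mul_dist_sub_one (hF : ∀ a, LipschitzWith K (F a))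
    (hx : IsDrivenTrajectory F u x) (hy : IsDrivenTrajectory F v y) (huv : u k = v k) :
    dist (x k) (y k) ≤ K * dist (x (k - 1)) (y (k - 1)) := by
  rw [hx k, hy k, huv]
  exact (hF (v k)).dist_le_mul _ _

theorem dist_le_pow_mul_dist_sub (hF : ∀ a, LipschitzWith K (F a))
    (hx : IsDrivenTrajectory F u x) (hy : IsDrivenTrajectory F v y)
    (huv : EqOn u v (Ioc (k - τ) k)) :
    dist (x k) (y k) ≤ K ^ τ * dist (x (k - τ)) (y (k - τ)) := by
  induction τ with
  | zero => simp
  | succ n ih =>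
    have agree_tail : EqOn u v (Ioc (k - n) k) :=
      huv.mono (Ioc_subset_Ioc_left (by lia))
    have agree_first : u (k - n) = v (k - n) := huv ⟨by lia, by lia⟩
    calc dist (x k) (y k)
        ≤ K ^ n * dist (x (k - n)) (y (k - n)) := ih agree_tail
      _ ≤ K ^ n * (K * dist (x (k - n - 1)) (y (k - n - 1))) := by
          gcongr
          exact hx.dist_le_mul_dist_sub_one hF hy agree_first
      _ = K ^ (n + 1) * dist (x (k - (n + 1 : ℕ))) (y (k - (n + 1 : ℕ))) := by
          rw [← mul_assoc, ← pow_succ, Nat.cast_succ, sub_sub]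

theorem dist_le_pow_mul_iSup_dist (hF : ∀ a, LipschitzWith K (F a))
    (hx : IsDrivenTrajectory F u x) (hy : IsDrivenTrajectory F v y)
    (hxy : BddAbove (range fun j => dist (x j) (y j))) (huv : EqOn u v (Ioc (k - τ) k)) :
    dist (x k) (y k) ≤ K ^ τ * ⨆ j, dist (x j) (y j) :=
  (hx.dist_le_pow_mul_dist_sub hF hy huv).trans <| by
    gcongr
    exact le_ciSup hxy (k - τ)

end IsDrivenTrajectory

end DrivenTrajectory

theorem bddAbove_range_norm_sub {ι E : Type*} [SeminormedAddCommGroup E] {f g : ι → E}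
    (hf : ∃ M, ∀ i, ‖f i‖ ≤ M) (hg : ∃ M, ∀ i, ‖g i‖ ≤ M) :
    BddAbove (range fun i => ‖f i - g i‖) := by
  obtain ⟨M, hM⟩ := hf
  obtain ⟨N, hN⟩ := hg
  exact ⟨M + N, forall_mem_range.2 fun i => norm_sub_le_of_le (hM i) (hN i)⟩

section Reservoir

variable {𝕜 E F U : Type*} [NontriviallyNormedField 𝕜]
  [SeminormedAddCommGroup E] [NormedSpace 𝕜 E] [SeminormedAddCommGroup F] [NormedSpace 𝕜 F]

/-- The state update of a reservoir with activation `σ`, reservoir matrix `Wres` and input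
coupling `Win`, with the input as first argument, as in `IsDrivenTrajectory`. The coupling is an
arbitrary function, and the pre-activations may live in a space `F` other than the state space. -/
def reservoirUpdate (σ : F → E) (Wres : E →L[𝕜] F) (Win : U → F) (a : U) (s : E) : E :=
  σ (Wres s + Win a)

theorem lipschitzWith_reservoirUpdate {σ : F → E} {L : ℝ≥0} (hσ : LipschitzWith L σ)
    (Wres : E →L[𝕜] F) (Win : U → F) (a : U) :
    LipschitzWith (L * ‖Wres‖₊) (reservoirUpdate σ Wres Win a) :=
  hσ.comp <| by simpa only [add_zero] using Wres.lipschitz.add (LipschitzWith.const (Win a))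

theorem reservoir_fading_memory_general {σ : F → E} {L : ℝ≥0} (hσ : LipschitzWith L σ)
    {Wres : E →L[𝕜] F} {Win : U → F} {v v' : ℤ → U} {r r' : ℤ → E}
    (hr : IsDrivenTrajectory (reservoirUpdate σ Wres Win) v r)
    (hr' : IsDrivenTrajectory (reservoirUpdate σ Wres Win) v' r')
    (hbdd : BddAbove (range fun j => ‖r j - r' j‖))
    {k : ℤ} {τ : ℕ} (hagree : EqOn v v' (Ioc (k - τ) k)) :
    ‖r k - r' k‖ ≤ (L * ‖Wres‖) ^ τ * ⨆ j, ‖r j - r' j‖ := by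
  simp only [← dist_eq_norm] at hbdd ⊢
  exact hr.dist_le_pow_mul_iSup_dist (lipschitzWith_reservoirUpdate hσ Wres Win) hr' hbdd hagree

end Reservoir

/-- **Fading-memory property.**
If two bounded inputs agree on the window `k - τ < j ≤ k`, then the corresponding
unique bounded trajectories satisfy `‖r k - r̃ k‖ ≤ γ^τ · sup_j ‖r j - r̃ j‖`,
where `γ = Lσ·‖W_res‖ < 1`. -/
theorem reservoir_fading_memory {nr nv : ℕ}
    (σ : EuclideanSpace ℝ (Fin nr) → EuclideanSpace ℝ (Fin nr)) (Lσ : ℝ≥0)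
    (hσ : LipschitzWith Lσ σ)
    (Wres : EuclideanSpace ℝ (Fin nr) →L[ℝ] EuclideanSpace ℝ (Fin nr))
    (Win : EuclideanSpace ℝ (Fin nv) →L[ℝ] EuclideanSpace ℝ (Fin nr))
    (γ : ℝ) (hγ : γ = (Lσ : ℝ) * ‖Wres‖) (hcontr : γ < 1)
    (v v' : ℤ → EuclideanSpace ℝ (Fin nv))
    (hv : ∃ M : ℝ, ∀ k : ℤ, ‖v k‖ ≤ M)
    (hv' : ∃ M : ℝ, ∀ k : ℤ, ‖v' k‖ ≤ M)
    (r r' : ℤ → EuclideanSpace ℝ (Fin nr))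
    (hrbdd : ∃ M : ℝ, ∀ k : ℤ, ‖r k‖ ≤ M)
    (hr'bdd : ∃ M : ℝ, ∀ k : ℤ, ‖r' k‖ ≤ M)
    (hr : ∀ k : ℤ, r k = σ (Wres (r (k - 1)) + Win (v k)))
    (hr' : ∀ k : ℤ, r' k = σ (Wres (r' (k - 1)) + Win (v' k)))
    (k : ℤ) (τ : ℕ)
    (hagree : ∀ j : ℤ, k - τ < j → j ≤ k → v j = v' j) :
    ‖r k - r' k‖ ≤ γ ^ τ * ⨆ j : ℤ, ‖r j - r' j‖ :=
  hγ ▸ reservoir_fading_memory_general (Win := Win) hσ hr hr'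
    (bddAbove_range_norm_sub hrbdd hr'bdd) fun j hj => hagree j hj.1 hj.2
end
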